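/- Let I be the ideal of R = ℚ[x,y,z] generated by y², x³z, z⁵, x²z³, x⁵, xyz⁴. Then I has height 3, the minimal number of generators of I is 6, and the quotient ring R/I is a finite-dimensional ℚ-vector space. -/

import Mathlib

/-!
Height: a prime containing `I` contains powers of all three variables, hence the variables
themselves, so it lies above the chain of primes `0 < (x) < (x, y) < (x, y, z)`; conversely
`dim ℚ[x, y, z] = 3`, and `(x, y, z)` is a prime containing `I`.

Number of generators: no generator divides another, so for `g ∈ I` the coefficients of a product
`f * g` at the six generating exponents are those of `g` multiplied by the constant term of `f`
(`coeff_mul_of_mem`). The map reading off these six coefficients therefore sends any generating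
set of `I` to a spanning set of `ℚ⁶`.

Finiteness: `R ⧸ I` is a finite type `ℚ`-algebra generated by nilpotent, hence integral, elements.
-/

open MvPolynomial

/-- The height of an ideal: the infimum of the heights of prime ideals containing it. -/
noncomputable def idealHeight {R : Type*} [CommRing R] (I : Ideal R) : ℕ∞ :=
  ⨅ p ∈ {p : PrimeSpectrum R | I ≤ p.asIdeal}, Order.height p

/-- The minimal number of generators of an ideal: the smallest cardinality of a
set of elements of the ring generating it as an ideal. -/
noncomputable def minNumGens {R : Type*} [CommRing R] (I : Ideal R) : ℕ :=
  sInf {n : ℕ | ∃ s : Finset R, s.card = n ∧ Ideal.span (s : Set R) = I}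

noncomputable abbrev x : MvPolynomial (Fin 3) ℚ := X 0
noncomputable abbrev y : MvPolynomial (Fin 3) ℚ := X 1
noncomputable abbrev z : MvPolynomial (Fin 3) ℚ := X 2

/-- The exponent vectors of the six monomial generators, in the order of the theorem. -/
noncomputable def genExp (i : Fin 6) : Fin 3 →₀ ℕ :=
  Finsupp.equivFunOnFinite.symm
    ((![![0, 2, 0], ![3, 0, 1], ![0, 0, 5], ![2, 0, 3], ![5, 0, 0], ![1, 1, 4]] :
      Fin 6 → Fin 3 → ℕ) i)

/-- The six monomial generators as a family indexed by `Fin 6`. -/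
noncomputable def genMon (i : Fin 6) : MvPolynomial (Fin 3) ℚ := monomial (genExp i) 1

lemma genExp_le_iff (i j : Fin 6) : genExp i ≤ genExp j ↔ i = j := by
  rw [Finsupp.le_def]
  simp only [genExp, Finsupp.equivFunOnFinite_symm_apply_apply]
  revert i j
  decide

lemma range_genMon :
    Set.range genMon = {y^2, x^3*z, z^5, x^2*z^3, x^5, x*y*z^4} := by
  have h : ∀ i, genMon i = x ^ (genExp i 0) * y ^ (genExp i 1) * z ^ (genExp i 2) := by
    intro i
    rw [genMon, monomial_eq, Finsupp.prod_fintype _ _ (by simp)]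
    simp [Fin.prod_univ_three]
  ext p
  simp only [Set.mem_range, Fin.exists_fin_succ, h, genExp]
  simp [eq_comm]

lemma coeff_mul_of_mem {g : MvPolynomial (Fin 3) ℚ} (hg : g ∈ Ideal.span (Set.range genMon))
    (f : MvPolynomial (Fin 3) ℚ) (i : Fin 6) :
    coeff (genExp i) (f * g) = coeff 0 f * coeff (genExp i) g := by
  induction hg using Submodule.span_induction generalizing f with
  | mem g hg =>
    obtain ⟨j, rfl⟩ := hg
    rw [genMon, coeff_mul_monomial', coeff_monomial]
    by_cases h : j = i
    · simp [h]
    · rw [if_neg (by rwa [genExp_le_iff]), if_neg, mul_zero]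
      exact fun e => h ((genExp_le_iff j i).1 e.le)
  | zero => simp
  | add a b _ _ ha hb => rw [mul_add, coeff_add, coeff_add, ha, hb, mul_add]
  | smul a g _ hg =>
    rw [smul_eq_mul, ← mul_assoc, hg, hg, ← constantCoeff_eq, map_mul, mul_assoc]

/-- The coefficients of a polynomial at the six generating exponents. -/
noncomputable def genCoeff : MvPolynomial (Fin 3) ℚ →ₗ[ℚ] (Fin 6 → ℚ) :=
  LinearMap.pi fun i => lcoeff ℚ (genExp i)

lemma genCoeff_apply (f : MvPolynomial (Fin 3) ℚ) (i : Fin 6) :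
    genCoeff f i = coeff (genExp i) f := rfl

lemma genCoeff_genMon (i : Fin 6) : genCoeff (genMon i) = Pi.single i 1 := by
  ext j
  rw [genCoeff_apply, genMon, coeff_monomial, Pi.single_apply]
  refine if_congr ⟨fun h => ((genExp_le_iff i j).1 h.le).symm, fun h => by rw [h]⟩ rfl rfl

lemma six_le_card (s : Finset (MvPolynomial (Fin 3) ℚ))
    (hs : Ideal.span (s : Set (MvPolynomial (Fin 3) ℚ)) = Ideal.span (Set.range genMon)) :
    6 ≤ s.card := by
  classical
  have key : ∀ g ∈ Ideal.span (s : Set (MvPolynomial (Fin 3) ℚ)),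
      genCoeff g ∈ Submodule.span ℚ ((s.image genCoeff : Finset (Fin 6 → ℚ)) : Set (Fin 6 → ℚ)) := by
    intro g hg
    induction hg using Submodule.span_induction with
    | mem g hg => exact Submodule.subset_span (by simpa using ⟨g, hg, rfl⟩)
    | zero => simp
    | add a b _ _ ha hb => rw [map_add]; exact add_mem ha hb
    | smul a g hg' hg =>
      have e : genCoeff (a • g) = coeff 0 a • genCoeff g := by
        ext i
        exact coeff_mul_of_mem (hs ▸ hg') a i
      rw [e]
      exact Submodule.smul_mem _ _ hg
  have top : Submodule.span ℚ ((s.image genCoeff : Finset (Fin 6 → ℚ)) : Set (Fin 6 → ℚ)) = ⊤ := by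
    rw [eq_top_iff, ← (Pi.basisFun ℚ (Fin 6)).span_eq, Submodule.span_le]
    rintro _ ⟨i, rfl⟩
    rw [Pi.basisFun_apply, ← genCoeff_genMon]
    exact key _ (hs ▸ Ideal.subset_span ⟨i, rfl⟩)
  have h := finrank_span_finset_le_card (R := ℚ) (s.image genCoeff : Finset (Fin 6 → ℚ))
  rw [Set.finrank, top, finrank_top, Module.finrank_fin_fun] at h
  exact h.trans Finset.card_image_le

lemma minNumGens_eq : minNumGens (Ideal.span (Set.range genMon)) = 6 := by
  classical
  have hinj : Function.Injective genMon := fun i j h =>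
    (genExp_le_iff i j).1 (monomial_left_injective one_ne_zero h).le
  refine le_antisymm (Nat.sInf_le ⟨Finset.univ.image genMon, ?_, by simp⟩) ?_
  · simp [Finset.card_image_of_injective _ hinj]
  · refine le_csInf ⟨_, Finset.univ.image genMon, rfl, by simp⟩ ?_
    rintro n ⟨s, rfl, hs⟩
    exact six_le_card s hs

lemma X_pow_mem (i : Fin 3) : (X i : MvPolynomial (Fin 3) ℚ) ^ 5 ∈
    Ideal.span {y^2, x^3*z, z^5, x^2*z^3, x^5, x*y*z^4} := by
  fin_cases i
  · exact Ideal.subset_span (by simp)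
  · change y ^ 5 ∈ _
    rw [show y ^ 5 = y ^ 3 * y ^ 2 by ring]
    exact Ideal.mul_mem_left _ _ (Ideal.subset_span (by simp))
  · exact Ideal.subset_span (by simp)

lemma finite_quotient (I : Ideal (MvPolynomial (Fin 3) ℚ)) (h : ∀ i, X i ^ 5 ∈ I) :
    FiniteDimensional ℚ (MvPolynomial (Fin 3) ℚ ⧸ I) := by
  have : Algebra.IsIntegral ℚ (MvPolynomial (Fin 3) ℚ ⧸ I) := by
    refine ⟨fun q => ?_⟩
    obtain ⟨p, rfl⟩ := Ideal.Quotient.mk_surjective q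
    induction p using MvPolynomial.induction_on with
    | C a => exact isIntegral_algebraMap
    | add p q hp hq => rw [map_add]; exact hp.add hq
    | mul_X p i hp =>
      rw [map_mul]
      refine hp.mul (IsIntegral.of_pow (n := 5) (by norm_num) ?_)
      rw [← map_pow, Ideal.Quotient.eq_zero_iff_mem.2 (h i)]
      exact isIntegral_zero
  exact Algebra.IsIntegral.finite

/-- The ideal of the variables in `s` is the kernel of the substitution setting them to zero. -/
lemma isPrime_span_vars (s : Set (Fin 3)) :
    (Ideal.span (X '' s : Set (MvPolynomial (Fin 3) ℚ))).IsPrime := by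
  classical
  let φ : MvPolynomial (Fin 3) ℚ →ₐ[ℚ] MvPolynomial (Fin 3) ℚ :=
    aeval fun i => if i ∈ s then 0 else X i
  have hφ (p : MvPolynomial (Fin 3) ℚ) : p - φ p ∈ Ideal.span (X '' s) := by
    induction p using MvPolynomial.induction_on with
    | C a => simp [φ, algebraMap_eq]
    | add p q hp hq =>
      rw [map_add, add_sub_add_comm]
      exact add_mem hp hq
    | mul_X p i hp =>
      have hi : X i - φ (X i) ∈ Ideal.span (X '' s) := by
        by_cases h : i ∈ s
        · simpa [φ, h] using Ideal.subset_span (Set.mem_image_of_mem X h)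
        · simp [φ, h]
      rw [map_mul, show p * X i - φ p * φ (X i) = (p - φ p) * X i + φ p * (X i - φ (X i)) by ring]
      exact add_mem (Ideal.mul_mem_right _ _ hp) (Ideal.mul_mem_left _ _ hi)
  have e : Ideal.span (X '' s : Set (MvPolynomial (Fin 3) ℚ)) = RingHom.ker φ := by
    apply le_antisymm
    · rw [Ideal.span_le]
      rintro _ ⟨i, hi, rfl⟩
      simp [φ, hi]
    · intro p hp
      simpa [(RingHom.mem_ker).1 hp] using hφ p
  rw [e]
  exact RingHom.ker_isPrime φ

lemma span_X_image_lt {s t : Set (Fin 3)} (hst : s ⊆ t) {i : Fin 3} (hi : i ∈ t) (hs : i ∉ s) :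
    Ideal.span (X '' s : Set (MvPolynomial (Fin 3) ℚ)) < Ideal.span (X '' t) := by
  refine lt_of_le_of_ne (Ideal.span_mono (Set.image_mono hst)) fun e => ?_
  have : (X i : MvPolynomial (Fin 3) ℚ) ∈ Ideal.span (X '' s) :=
    e ▸ Ideal.subset_span ⟨i, hi, rfl⟩
  rw [mem_ideal_span_X_image] at this
  obtain ⟨j, hj, hne⟩ := this (Finsupp.single i 1) (by simp [support_X])
  obtain rfl : i = j := by
    by_contra h
    exact hne (Finsupp.single_eq_of_ne (Ne.symm h))
  exact hs hj

lemma height_vars : 3 ≤ (Ideal.span (X '' Set.univ : Set (MvPolynomial (Fin 3) ℚ))).height := by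
  have hp (s : Set (Fin 3)) : (Ideal.span (X '' s : Set (MvPolynomial (Fin 3) ℚ))).IsPrime :=
    isPrime_span_vars _
  have h1 := Ideal.height_add_one_le_of_lt_of_isPrime
    (span_X_image_lt (s := ∅) (t := {0}) (i := 0) (by simp) (by simp) (by simp))
  have h2 := Ideal.height_add_one_le_of_lt_of_isPrime
    (span_X_image_lt (s := {0}) (t := {0, 1}) (i := 1) (by simp) (by simp) (by simp))
  have h3 := Ideal.height_add_one_le_of_lt_of_isPrime
    (span_X_image_lt (s := {0, 1}) (t := .univ) (i := 2) (by simp) (by simp) (by simp))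
  calc (3 : ℕ∞) ≤ (Ideal.span (X '' ∅ : Set (MvPolynomial (Fin 3) ℚ))).height + 1 + 1 + 1 := by
        rw [add_assoc, add_assoc]; exact le_add_self
    _ ≤ (Ideal.span (X '' {0} : Set (MvPolynomial (Fin 3) ℚ))).height + 1 + 1 := by gcongr
    _ ≤ (Ideal.span (X '' {0, 1} : Set (MvPolynomial (Fin 3) ℚ))).height + 1 := by gcongr
    _ ≤ _ := h3

lemma idealHeight_eq (I : Ideal (MvPolynomial (Fin 3) ℚ)) (h : ∀ i, X i ^ 5 ∈ I)
    (hI : I ≤ Ideal.span (X '' Set.univ)) : idealHeight I = 3 := by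
  apply le_antisymm
  · have hp : (Ideal.span (X '' Set.univ : Set (MvPolynomial (Fin 3) ℚ))).IsPrime :=
      isPrime_span_vars _
    refine (iInf₂_le ⟨_, hp⟩ hI).trans ?_
    rw [← PrimeSpectrum.height_eq_orderHeight]
    have := Ideal.height_le_ringKrullDim_of_isPrime
      (I := Ideal.span (X '' Set.univ : Set (MvPolynomial (Fin 3) ℚ)))
    rw [MvPolynomial.ringKrullDim_of_isNoetherianRing, ringKrullDim_eq_zero_of_field] at this
    simp only [Nat.card_eq_fintype_card, Fintype.card_fin, zero_add] at this
    exact WithBot.coe_le_coe.1 this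
  · refine le_iInf₂ fun p hp => height_vars.trans ?_
    rw [← PrimeSpectrum.height_eq_orderHeight]
    refine Ideal.height_mono (Ideal.span_le.2 ?_)
    rintro _ ⟨i, -, rfl⟩
    exact p.isPrime.mem_of_pow_mem 5 (hp (h i))

theorem stmt_10 (I : Ideal (MvPolynomial (Fin 3) ℚ))
    (hI : I = Ideal.span {y^2, x^3*z, z^5, x^2*z^3, x^5, x*y*z^4}) :
    idealHeight I = 3 ∧ minNumGens I = 6 ∧
    FiniteDimensional ℚ (MvPolynomial (Fin 3) ℚ ⧸ I) := by
  have hX : ∀ i, X i ^ 5 ∈ I := fun i => hI ▸ X_pow_mem i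
  refine ⟨idealHeight_eq I hX ?_, ?_, finite_quotient I hX⟩
  · have hm (i : Fin 3) : (X i : MvPolynomial (Fin 3) ℚ) ∈ Ideal.span (X '' Set.univ) :=
      Ideal.subset_span ⟨i, trivial, rfl⟩
    rw [hI, Ideal.span_le]
    rintro p (rfl | rfl | rfl | rfl | rfl | rfl)
    · exact Ideal.pow_mem_of_mem _ (hm 1) _ (by norm_num)
    · exact Ideal.mul_mem_left _ _ (hm 2)
    · exact Ideal.pow_mem_of_mem _ (hm 2) _ (by norm_num)
    · exact Ideal.mul_mem_left _ _ (Ideal.pow_mem_of_mem _ (hm 2) _ (by norm_num))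
    · exact Ideal.pow_mem_of_mem _ (hm 0) _ (by norm_num)
    · exact Ideal.mul_mem_left _ _ (Ideal.pow_mem_of_mem _ (hm 2) _ (by norm_num))
  · rw [hI, ← range_genMon, minNumGens_eq]
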